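/- The Galois group of x^5 + 20x + 32 over ℚ has order 10 (it is the dihedral group D_5). -/

import Mathlib

open Polynomial

theorem val5 : ∀ i : ZMod 5, 4 * (i.val % 5) % 5 = (-i).val % 5 := by decide

theorem grp10 {G : Type*} [Group G] (hc : Nat.card G = 10) (hn : ¬ ∀ x y : G, x * y = y * x) :
    Nonempty (G ≃* DihedralGroup 5) := by
  have : Finite G := Nat.finite_of_card_ne_zero (by omega)
  have : Fact (Nat.Prime 5) := ⟨by norm_num⟩
  have : Fact (Nat.Prime 2) := ⟨by norm_num⟩
  obtain ⟨r, hr⟩ := exists_prime_orderOf_dvd_card' (G := G) 5 (by rw [hc]; norm_num)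
  obtain ⟨s, hs⟩ := exists_prime_orderOf_dvd_card' (G := G) 2 (by rw [hc]; norm_num)
  have hs2 : s * s = 1 := by rw [← pow_two, ← hs, pow_orderOf_eq_one]
  have hidx : (Subgroup.zpowers r).index = 2 := by
    have := (Subgroup.zpowers r).card_mul_index
    rw [Nat.card_zpowers, hr, hc] at this
    omega
  have hnorm := Subgroup.normal_of_index_eq_two hidx
  have hsn : s ∉ Subgroup.zpowers r := by
    intro h
    have := orderOf_dvd_of_mem_zpowers h
    rw [hs, hr] at this
    omega
  have hmem := hnorm.conj_mem r (Subgroup.mem_zpowers r) s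
  rw [← mem_powers_iff_mem_zpowers] at hmem
  obtain ⟨k, hk⟩ := hmem
  have hsi : s⁻¹ = s := inv_eq_of_mul_eq_one_right hs2
  simp only [hsi] at hk
  have hconj : ∀ n : ℕ, s * r ^ n * s = r ^ (k * n) := by
    intro n
    rw [pow_mul, hk]
    have := conj_pow (i := n) (a := s) (b := r)
    rw [hsi] at this
    exact this.symm
  have hkk : r ^ (k * k) = r ^ 1 := by
    rw [← hconj k, hk, pow_one]
    calc s * (s * r * s) * s = (s * s) * r * (s * s) := by group
      _ = r := by rw [hs2]; simp
  rw [pow_eq_pow_iff_modEq, hr] at hkk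
  have hk5 : k % 5 = 1 ∨ k % 5 = 4 := by
    have h1 : (k % 5) * (k % 5) % 5 = 1 := by
      rw [← Nat.mul_mod]; exact hkk
    have h2 : k % 5 < 5 := Nat.mod_lt _ (by norm_num)
    interval_cases k % 5 <;> simp_all
  have hk4 : k % 5 = 4 := by
    rcases hk5 with h | h
    · exfalso
      apply hn
      have h1 : r ^ k = r ^ 1 := by rw [pow_eq_pow_iff_modEq, hr]; exact h
      have hcm : Commute r s := by
        have h2 : s * r * s = r := by rw [← hk]; simpa using h1
        show r * s = s * r
        calc r * s = (s * r * s) * s := by rw [h2]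
          _ = s * r * (s * s) := by group
          _ = s * r := by rw [hs2]; simp
      have ho := hcm.orderOf_mul_eq_mul_orderOf_of_coprime (by rw [hr, hs]; norm_num)
      have : IsCyclic G := isCyclic_of_orderOf_eq_card (r * s) (by rw [ho, hr, hs, hc])
      intro x y
      exact (IsCyclic.commGroup (α := G)).mul_comm x y
    · exact h
  have hadd : ∀ i j : ZMod 5, r ^ (i + j).val = r ^ i.val * r ^ j.val := by
    intro i j
    rw [← pow_add, pow_eq_pow_iff_modEq, hr, ZMod.val_add]
    exact Nat.mod_modEq _ _
  have hneg : ∀ i : ZMod 5, r ^ i.val * s = s * r ^ (-i).val := by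
    intro i
    have h1 : s * r ^ i.val * s = r ^ (-i).val := by
      rw [hconj, pow_eq_pow_iff_modEq, hr]
      show _ % 5 = _ % 5
      rw [Nat.mul_mod, hk4]
      exact val5 i
    calc r ^ i.val * s = (s * s) * r ^ i.val * s := by rw [hs2]; simp
      _ = s * (s * r ^ i.val * s) := by group
      _ = _ := by rw [h1]
  let φ : DihedralGroup 5 →* G := MonoidHom.mk' (fun x => match x with
    | .r i => r ^ i.val
    | .sr i => s * r ^ i.val) (by
      rintro (i | i) (j | j)
      · simp [hadd]
      · simp only [DihedralGroup.r_mul_sr]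
        rw [← mul_assoc, hneg, mul_assoc, ← hadd]; congr 3; ring
      · simp [hadd, mul_assoc]
      · simp only [DihedralGroup.sr_mul_sr]
        rw [mul_assoc, ← mul_assoc _ s, hneg, mul_assoc, ← mul_assoc, hs2, one_mul, ← hadd]
        congr 2; ring)
  have hinj : Function.Injective φ := by
    rw [injective_iff_map_eq_one]
    rintro (i | i) h
    · have h : r ^ i.val = 1 := h
      rw [← orderOf_dvd_iff_pow_eq_one, hr] at h
      have := ZMod.val_lt i
      have h0 : i.val = 0 := by omega
      rw [ZMod.val_eq_zero] at h0
      rw [h0]; rfl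
    · exfalso
      have h : s * r ^ i.val = 1 := h
      apply hsn
      rw [eq_inv_of_mul_eq_one_left h]
      exact inv_mem (pow_mem (Subgroup.mem_zpowers r) _)
  have hb : Function.Bijective φ := by
    rw [Nat.bijective_iff_injective_and_card]
    exact ⟨hinj, by rw [hc, DihedralGroup.nat_card]⟩
  exact ⟨(MulEquiv.ofBijective φ hb).symm⟩

theorem irr : Irreducible (X ^ 5 + 20 * X + 32 : ℚ[X]) := by
  have hd : (X ^ 5 + C (-10) * X ^ 4 + C 40 * X ^ 3 + C (-80) * X ^ 2 + C 100 * X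
      + C (-40) : ℤ[X]).degree = 5 := by
    compute_degree!
  have hm : (X ^ 5 + C (-10) * X ^ 4 + C 40 * X ^ 3 + C (-80) * X ^ 2 + C 100 * X
      + C (-40) : ℤ[X]).Monic := by
    monicity!
  have h1 : Irreducible (X ^ 5 + C (-10) * X ^ 4 + C 40 * X ^ 3 + C (-80) * X ^ 2 + C 100 * X
      + C (-40) : ℤ[X]) := by
    refine irreducible_of_eisenstein_criterion (P := Ideal.span {5}) ?_ ?_ ?_ ?_ ?_ hm.isPrimitive
    · rw [Ideal.span_singleton_prime (by norm_num)]; norm_num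
    · rw [hm.leadingCoeff, Ideal.mem_span_singleton]; norm_num
    · intro n hn
      rw [hd] at hn
      have hn : n < 5 := by exact_mod_cast hn
      rw [Ideal.mem_span_singleton]
      simp only [coeff_add, coeff_C_mul, coeff_X_pow, coeff_X, coeff_C]
      interval_cases n <;> norm_num
    · rw [hd]; norm_num
    · rw [Ideal.span_singleton_pow, Ideal.mem_span_singleton]
      simp only [coeff_add, coeff_C_mul, coeff_X_pow, coeff_X, coeff_C]
      norm_num
  rw [hm.irreducible_iff_irreducible_map_fraction_map (K := ℚ)] at h1
  rw [← MulEquiv.irreducible_iff (algEquivAevalXAddC (-2 : ℚ))]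
  convert h1 using 1
  simp only [algEquivAevalXAddC_apply, map_add, map_mul, map_pow, aeval_X, map_ofNat,
    Polynomial.map_add, Polynomial.map_mul, Polynomial.map_pow, map_X, Polynomial.map_neg, Polynomial.map_ofNat, map_neg]
  ring

theorem fac {R : Type*} [CommRing R] (a x : R) (ha : a ^ 5 + 20 * a + 32 = 0)
    (h : R) (hh : 16 * h = 1) :
    x ^ 5 + 20 * x + 32 = (x ^ 2 - (-2 - 8 * h * a - 4 * h * a ^ 2 - 2 * h * a ^ 4) * x
      + (2 - 8 * h * a - 4 * h * a ^ 3 + 4 * h * a ^ 4)) * ((x - a) *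
      (x ^ 2 - (2 - 8 * h * a + 4 * h * a ^ 2 + 2 * h * a ^ 4) * x
      + (2 - 24 * h * a + 8 * h * a ^ 2 - 4 * h * a ^ 3))) := by
  grind

theorem tr {R : Type*} [Field R] [CharZero R] (a b : R) (ha : a ^ 5 + 20 * a + 32 = 0)
    (h : R) (hh : 16 * h = 1) (c : R)
    (hb : b ^ 2 - (-2 - 8 * h * a - 4 * h * a ^ 2 - 2 * h * a ^ 4) * b
      + (2 - 8 * h * a - 4 * h * a ^ 3 + 4 * h * a ^ 4) = 0)
    (hc : c = - 4 * h * a + 2 * h * a ^ 2 + h * a ^ 4 +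
      (6 * h * a - 2 * h * a ^ 2 + h * a ^ 3) * b) :
      (c ^ 2 - (2 - 8 * h * a + 4 * h * a ^ 2 + 2 * h * a ^ 4) * c
      + (2 - 24 * h * a + 8 * h * a ^ 2 - 4 * h * a ^ 3)) = 0 := by
  grind

theorem ne {R : Type*} [Field R] [CharZero R] (a : R) (ha : a ^ 5 + 20 * a + 32 = 0)
    (h : R) (hh : 16 * h = 1)
    (hb : a ^ 2 - (-2 - 8 * h * a - 4 * h * a ^ 2 - 2 * h * a ^ 4) * a
      + (2 - 8 * h * a - 4 * h * a ^ 3 + 4 * h * a ^ 4) = 0) : False := by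
  grind

theorem rh {F K E : Type*} [Field F] [Field K] [Field E] [Algebra F K] [Algebra F E] (a : K)
    (ha : IsIntegral F a) (ρ : E) (h : ρ ∈ (minpoly F a).aroots E) :
    Nonempty (IntermediateField.adjoin F {a} →+* E) :=
  ⟨((IntermediateField.algHomAdjoinIntegralEquiv F ha).symm ⟨ρ, h⟩).toRingHom⟩

theorem main (K : Type) [Field K] [Algebra ℚ K]
    [hK : IsSplittingField ℚ K (X ^ 5 + 20 * X + 32 : ℚ[X])] :
    Module.finrank ℚ K = 10 ∧ Nonempty ((K ≃ₐ[ℚ] K) ≃* DihedralGroup 5) := by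
  have : CharZero K := algebraRat.charZero K
  have hdeg : (X ^ 5 + 20 * X + 32 : ℚ[X]).natDegree = 5 := by compute_degree!
  have hmon : (X ^ 5 + 20 * X + 32 : ℚ[X]).Monic := by monicity!
  have hmap : (X ^ 5 + 20 * X + 32 : ℚ[X]).map (algebraMap ℚ K) = X ^ 5 + 20 * X + 32 := by
    simp
  have hsp := hK.splits
  have : FiniteDimensional ℚ K := IsSplittingField.finiteDimensional K (X ^ 5 + 20 * X + 32 : ℚ[X])
  have : IsGalois ℚ K := IsGalois.of_separable_splitting_field irr.separable
  obtain ⟨a, ha⟩ := hsp.exists_eval_eq_zero (by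
    rw [degree_map, degree_eq_natDegree hmon.ne_zero, hdeg]; norm_num)
  rw [hmap] at ha hsp
  replace ha : a ^ 5 + 20 * a + 32 = 0 := by simpa using ha
  have hmin : ∀ {F : Type} [Field F] [Algebra ℚ F] (x : F), x ^ 5 + 20 * x + 32 = 0 →
      minpoly ℚ x = X ^ 5 + 20 * X + 32 := by
    intro F _ _ x hx
    exact (minpoly.eq_of_irreducible_of_monic irr (by simpa [map_ofNat] using hx) hmon).symm
  obtain ⟨h, hh⟩ : ∃ h : K, 16 * h = 1 := ⟨(16 : K)⁻¹, by norm_num⟩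
  have hfacC := fac (C a) (X : K[X]) (by
    have := congrArg (C : K → K[X]) ha; simpa [map_ofNat] using this) (C h) (by
    have := congrArg (C : K → K[X]) hh; simpa [map_ofNat] using this)
  obtain ⟨b, hb⟩ := (hsp.of_dvd (by rw [← hmap]; exact (hmon.map _).ne_zero)
    (Dvd.intro _ hfacC.symm)).exists_eval_eq_zero (by
      have : (X ^ 2 - (-2 - 8 * C h * C a - 4 * C h * C a ^ 2 - 2 * C h * C a ^ 4) * X
        + (2 - 8 * C h * C a - 4 * C h * C a ^ 3 + 4 * C h * C a ^ 4) : K[X]) =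
        X ^ 2 - C (-2 - 8 * h * a - 4 * h * a ^ 2 - 2 * h * a ^ 4) * X
        + C (2 - 8 * h * a - 4 * h * a ^ 3 + 4 * h * a ^ 4) := by simp [map_ofNat]
      rw [this]
      have h2 : (X ^ 2 - C (-2 - 8 * h * a - 4 * h * a ^ 2 - 2 * h * a ^ 4) * X
        + C (2 - 8 * h * a - 4 * h * a ^ 3 + 4 * h * a ^ 4) : K[X]).degree = 2 := by
        compute_degree!
      rw [h2]; norm_num)
  replace hb : b ^ 2 - (-2 - 8 * h * a - 4 * h * a ^ 2 - 2 * h * a ^ 4) * b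
      + (2 - 8 * h * a - 4 * h * a ^ 3 + 4 * h * a ^ 4) = 0 := by simpa using hb
  have hbf : b ^ 5 + 20 * b + 32 = 0 := by rw [fac a b ha h hh, hb, zero_mul]
  have hab : b ≠ a := by
    rintro rfl
    exact ne b ha h hh hb
  obtain ⟨c, hc⟩ : ∃ c, c = - 4 * h * a + 2 * h * a ^ 2 + h * a ^ 4 +
      (6 * h * a - 2 * h * a ^ 2 + h * a ^ 3) * b := ⟨_, rfl⟩
  have hc0 := tr a b ha h hh c hb hc
  have hroots : ∀ x : K, x ^ 5 + 20 * x + 32 = 0 → x = a ∨ x = b ∨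
      x = (-2 - 8 * h * a - 4 * h * a ^ 2 - 2 * h * a ^ 4) - b ∨ x = c ∨
      x = (2 - 8 * h * a + 4 * h * a ^ 2 + 2 * h * a ^ 4) - c := by
    intro x hx
    rw [fac a x ha h hh, mul_eq_zero, mul_eq_zero] at hx
    rcases hx with hx | hx | hx
    · have : (x - b) * (x - ((-2 - 8 * h * a - 4 * h * a ^ 2 - 2 * h * a ^ 4) - b)) = 0 := by
        linear_combination hx - hb
      rcases mul_eq_zero.1 this with h | h
      · exact Or.inr (Or.inl (sub_eq_zero.1 h))
      · exact Or.inr (Or.inr (Or.inl (sub_eq_zero.1 h)))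
    · exact Or.inl (sub_eq_zero.1 hx)
    · have : (x - c) * (x - ((2 - 8 * h * a + 4 * h * a ^ 2 + 2 * h * a ^ 4) - c)) = 0 := by
        linear_combination hx - hc0
      rcases mul_eq_zero.1 this with h | h
      · exact Or.inr (Or.inr (Or.inr (Or.inl (sub_eq_zero.1 h))))
      · exact Or.inr (Or.inr (Or.inr (Or.inr (sub_eq_zero.1 h))))
  have hgen : ∀ S : Subalgebra ℚ K, (∀ x : K, x ^ 5 + 20 * x + 32 = 0 → x ∈ S) → S = ⊤ := by
    intro S hS
    rw [eq_top_iff, ← IsSplittingField.adjoin_rootSet K (X ^ 5 + 20 * X + 32 : ℚ[X]),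
      Algebra.adjoin_le_iff]
    intro x hx
    rw [mem_rootSet] at hx
    exact hS x (by simpa [map_ofNat] using hx.2)
  obtain ⟨L, hL⟩ : ∃ L : IntermediateField ℚ K, L = IntermediateField.adjoin ℚ {a} := ⟨_, rfl⟩
  have haL : a ∈ L := hL ▸ IntermediateField.mem_adjoin_simple_self ℚ a
  have hL5 : Module.finrank ℚ L = 5 := by
    rw [hL, IntermediateField.adjoin.finrank (Algebra.IsIntegral.isIntegral a), hmin a ha, hdeg]
  have hhL : h ∈ L := by
    have : h = algebraMap ℚ K (1/16) := by
      have : (algebraMap ℚ K (1/16)) = 1/16 := by simp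
      rw [this]; linear_combination (1/16) * hh
    rw [this]; exact L.algebraMap_mem _
  have htop : IntermediateField.adjoin L {b} = ⊤ := by
    have h1 := hgen ((IntermediateField.adjoin L {b}).restrictScalars ℚ).toSubalgebra (by
      intro x hx
      have hbM : b ∈ IntermediateField.adjoin L {b} := IntermediateField.mem_adjoin_simple_self L b
      have haM : a ∈ IntermediateField.adjoin L {b} :=
        (IntermediateField.adjoin L {b}).algebraMap_mem ⟨a, haL⟩
      have hhM : h ∈ IntermediateField.adjoin L {b} :=
        (IntermediateField.adjoin L {b}).algebraMap_mem ⟨h, hhL⟩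
      show x ∈ IntermediateField.adjoin L {b}
      generalize IntermediateField.adjoin L {b} = M at *
      rcases hroots x hx with rfl | rfl | rfl | rfl | rfl <;> (try rw [hc]) <;>
        repeat' first
          | assumption
          | exact ofNat_mem M _
          | apply sub_mem
          | apply add_mem
          | apply mul_mem
          | apply neg_mem
          | apply pow_mem)
    rw [eq_top_iff]
    intro x _
    have : x ∈ ((IntermediateField.adjoin L {b}).restrictScalars ℚ).toSubalgebra := by
      rw [h1]; trivial
    exact this
  have hle : Module.finrank L K ≤ 2 := by
    rw [← IntermediateField.finrank_top', ← htop,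
      IntermediateField.adjoin.finrank (Algebra.IsIntegral.isIntegral b)]
    let q : L[X] := X ^ 2 - C (-2 - 8 * ⟨h, hhL⟩ * ⟨a, haL⟩ - 4 * ⟨h, hhL⟩ * ⟨a, haL⟩ ^ 2
        - 2 * ⟨h, hhL⟩ * ⟨a, haL⟩ ^ 4) * X
        + C (2 - 8 * ⟨h, hhL⟩ * ⟨a, haL⟩ - 4 * ⟨h, hhL⟩ * ⟨a, haL⟩ ^ 3
          + 4 * ⟨h, hhL⟩ * ⟨a, haL⟩ ^ 4)
    have hq : q.natDegree = 2 := by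
      unfold q; compute_degree!
    have hq0 : q ≠ 0 := by intro h0; rw [h0] at hq; simp at hq
    rw [← hq]
    refine natDegree_le_of_dvd (minpoly.dvd _ _ ?_) hq0
    have e1 : algebraMap L K ⟨a, haL⟩ = a := rfl
    have e2 : algebraMap L K ⟨h, hhL⟩ = h := rfl
    simpa only [q, map_add, map_sub, map_mul, map_pow, map_neg, aeval_X, aeval_C, e1, e2,
      map_ofNat] using hb
  have hne : Module.finrank L K ≠ 1 := by
    intro h1
    have hbL : b ∈ L := by
      have h2 : Module.finrank ℚ L = Module.finrank ℚ K := by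
        rw [← Module.finrank_mul_finrank ℚ L K, h1, mul_one]
      have h3 : L = ⊤ := IntermediateField.eq_of_le_of_finrank_eq le_top
        (by rw [h2, IntermediateField.finrank_top'])
      rw [h3]; trivial
    obtain ⟨ρ, hρ⟩ : ∃ ρ : ℝ, ρ ^ 5 + 20 * ρ + 32 = 0 := by
      have := intermediate_value_Icc (show (-2 : ℝ) ≤ 0 by norm_num)
        (f := fun x : ℝ => x ^ 5 + 20 * x + 32) (by fun_prop)
      obtain ⟨x, -, hx⟩ := this (show (0 : ℝ) ∈ _ by norm_num)
      exact ⟨x, hx⟩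
    have hψ : Nonempty (L →+* ℝ) := by
      rw [hL]
      refine rh a (Algebra.IsIntegral.isIntegral a) ρ ?_
      rw [hmin a ha, mem_aroots]
      exact ⟨hmon.ne_zero, by simpa [map_ofNat] using hρ⟩
    obtain ⟨ψ⟩ := hψ
    have e1 : ∀ x : L, (x : K) ^ 5 + 20 * x + 32 = 0 → ψ x ^ 5 + 20 * ψ x + 32 = 0 := by
      intro x hx
      have : x ^ 5 + 20 * x + 32 = 0 := by
        apply (algebraMap L K).injective
        simp only [map_add, map_mul, map_pow, map_ofNat, map_zero]
        exact hx
      have := congrArg ψ this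
      simpa only [map_add, map_mul, map_pow, map_ofNat, map_zero] using this
    have ea := e1 ⟨a, haL⟩ ha
    have eb := e1 ⟨b, hbL⟩ hbf
    have hmono : StrictMono (fun x : ℝ => x ^ 5 + 20 * x + 32) := by
      intro x y hxy
      have : x ^ 5 < y ^ 5 := (Odd.strictMono_pow (by decide)) hxy
      show x ^ 5 + 20 * x + 32 < y ^ 5 + 20 * y + 32
      linarith
    have := ψ.injective (hmono.injective (eb.trans ea.symm))
    exact hab (congrArg Subtype.val this)
  have h10 : Module.finrank ℚ K = 10 := by
    have h1 := Module.finrank_mul_finrank ℚ L K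
    have h2 : 0 < Module.finrank L K := Module.finrank_pos
    have : Module.finrank L K = 2 := by omega
    rw [← h1, hL5, this]
  refine ⟨h10, grp10 ?_ ?_⟩
  · rw [IsGalois.card_aut_eq_finrank, h10]
  · intro hcomm
    have hfix : ∀ τ ∈ L.fixingSubgroup, τ = 1 := by
      intro τ hτ
      have hτa : τ a = a := (IntermediateField.mem_fixingSubgroup_iff L τ).1 hτ a haL
      have h1 := hgen (AlgHom.equalizer (τ : K →ₐ[ℚ] K) (AlgHom.id ℚ K)) (by
        intro x hx
        obtain ⟨g, hg⟩ := (isConjRoot_iff_exists_algEquiv (K := ℚ) (x := x) (y := a)).1 (by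
          show minpoly ℚ x = minpoly ℚ a
          rw [hmin a ha, hmin x hx])
        show τ x = x
        rw [← hg]
        have := congrArg (fun σ : K ≃ₐ[ℚ] K => σ a) (hcomm τ g)
        simp only [AlgEquiv.mul_apply, hτa] at this
        exact this)
      ext x
      have : x ∈ AlgHom.equalizer (τ : K →ₐ[ℚ] K) (AlgHom.id ℚ K) := by rw [h1]; trivial
      exact this
    have hc1 := IsGalois.card_fixingSubgroup_eq_finrank L
    rw [(Subgroup.eq_bot_iff_forall _).2 hfix, Subgroup.card_bot] at hc1
    exact hne hc1.symm

theorem switch (K : Type) [Field K] (i1 i2 : Algebra ℚ K)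
    (h : @IsSplittingField ℚ K _ _ i1 (X ^ 5 + 20 * X + 32 : ℚ[X])) :
    @IsSplittingField ℚ K _ _ i2 (X ^ 5 + 20 * X + 32 : ℚ[X]) := by
  have : i1 = i2 := Subsingleton.elim _ _
  subst this
  exact h

theorem stmt_16 :
    Module.finrank ℚ (X ^ 5 + 20 * X + 32 : Polynomial ℚ).SplittingField = 10 ∧
    Nonempty (((X ^ 5 + 20 * X + 32 : Polynomial ℚ).SplittingField ≃ₐ[ℚ]
        (X ^ 5 + 20 * X + 32 : Polynomial ℚ).SplittingField) ≃* DihedralGroup 5) := by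
  have := switch _ _ DivisionRing.toRatAlgebra
    (IsSplittingField.splittingField (X ^ 5 + 20 * X + 32 : ℚ[X]))
  exact main _
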